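/- Let α, β ∈ (1,2), N_x, N_y ≥ 1, η_α, η_β > 0, and N = N_x·N_y. Set J_{α,β} = η_α (I_{N_y} ⊗ A_α) + η_β (A_β ⊗ I_{N_x}) and P_τ = I_N + η_α (I_{N_y} ⊗ P_α) + η_β (P_β ⊗ I_{N_x}), where P_γ = Q_γ·τ(Â_γ). Then for every nonzero v ∈ ℝ^N, (3/8)·vᵀ P_τ v < vᵀ (I_N + J_{α,β}) v < 2·vᵀ P_τ v; consequently every eigenvalue λ of P_τ^{−1}(I_N + J_{α,β}) satisfies 3/8 < λ < 2, uniformly in N_x, N_y, η_α, η_β. -/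

import Mathlib

open Matrix Kronecker

/-- The fourth-order coefficients `s_k^{(γ)}`. -/
noncomputable def sCoef (γ : ℝ) (k : ℤ) : ℝ :=
  ((-1 : ℝ) ^ k * Real.Gamma (γ + 1) /
      (Real.Gamma (γ / 2 - k + 1) * Real.Gamma (γ / 2 + k + 1))) *
    (1 + γ * (γ + 1) * (γ + 2) / (6 * (γ - 2 * k + 2) * (γ + 2 * k + 2)))

/-- `A_γ`: the symmetric Toeplitz matrix with `(i,j)` entry `s_{i-j}^{(γ)}`. -/
noncomputable def Amat (γ : ℝ) (N : ℕ) : Matrix (Fin N) (Fin N) ℝ :=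
  fun i j => sCoef γ ((i : ℤ) - (j : ℤ))

/-- The second-order coefficients `g_k^{(γ)}`. -/
noncomputable def gCoef (γ : ℝ) (k : ℤ) : ℝ :=
  (-1 : ℝ) ^ k * Real.Gamma (γ + 1) /
    (Real.Gamma (γ / 2 - k + 1) * Real.Gamma (γ / 2 + k + 1))

/-- `Â_γ`: the symmetric Toeplitz matrix with `(i,j)` entry `g_{i-j}^{(γ)}`. -/
noncomputable def Ahat (γ : ℝ) (N : ℕ) : Matrix (Fin N) (Fin N) ℝ :=
  fun i j => gCoef γ ((i : ℤ) - (j : ℤ))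

/-- τ part of the symmetric Toeplitz matrix with first column `t 0, …, t (N-1)`:
with 1-based indices `i, j ∈ {1,…,N}` (here `i.val + 1`, `j.val + 1`) and the
convention `t m = 0` for `m ≥ N`, the `(i,j)` entry is
`t |i-j| - t (i+j) - t (2(N+1)-i-j)`. -/
noncomputable def tauOf (N : ℕ) (t : ℕ → ℝ) : Matrix (Fin N) (Fin N) ℝ :=
  fun i j =>
    (fun m => if m < N then t m else 0) ((i : ℤ) - (j : ℤ)).natAbs -
    (fun m => if m < N then t m else 0) (((i : ℕ) + 1) + ((j : ℕ) + 1)) -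
    (fun m => if m < N then t m else 0) (2 * (N + 1) - ((i : ℕ) + 1) - ((j : ℕ) + 1))

/-- `τ(Â_γ)`. -/
noncomputable def tauAhat (γ : ℝ) (N : ℕ) : Matrix (Fin N) (Fin N) ℝ :=
  tauOf N (fun m => gCoef γ (m : ℤ))

/-- The tridiagonal matrix with `2` on the diagonal and `-1` on the sub/superdiagonals. -/
def triDiag (N : ℕ) : Matrix (Fin N) (Fin N) ℝ :=
  fun i j =>
    if (i : ℤ) = (j : ℤ) then 2
    else if ((i : ℤ) - (j : ℤ)).natAbs = 1 then -1 else 0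

/-- `Q_γ = I_N + (γ/24)·T_N`. -/
noncomputable def Qmat (γ : ℝ) (N : ℕ) : Matrix (Fin N) (Fin N) ℝ :=
  1 + (γ / 24) • triDiag N

/-- `P_γ = Q_γ · τ(Â_γ)`. -/
noncomputable def Pmat (γ : ℝ) (N : ℕ) : Matrix (Fin N) (Fin N) ℝ :=
  Qmat γ N * tauAhat γ N

/-- Generic Toeplitz matrix. -/
def toepM (g : ℤ → ℝ) (n : ℕ) : Matrix (Fin n) (Fin n) ℝ := fun i j => g ((i : ℤ) - (j : ℤ))

/-- Weighted diagonal dominance implies positive semidefiniteness. -/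
lemma psd_of_dom {n : ℕ} (M B : Matrix (Fin n) (Fin n) ℝ) (hM : ∀ i j, M i j = M j i)
    (hB : ∀ i j, B i j = B j i) (hoff : ∀ i j, i ≠ j → |M i j| ≤ -B i j)
    (hdiag : ∀ i, B i i ≤ M i i) (hrow : ∀ i, 0 ≤ ∑ j, B i j) : M.PosSemidef := by
  refine Matrix.PosSemidef.of_dotProduct_mulVec_nonneg ?_ ?_
  · ext i j
    simp [Matrix.conjTranspose_apply, hM j i]
  · intro x
    have h1 : star x ⬝ᵥ (M *ᵥ x) = ∑ i, ∑ j, M i j * (x i * x j) := by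
      simp only [dotProduct, Matrix.mulVec, Finset.mul_sum]
      refine Finset.sum_congr rfl fun i _ => Finset.sum_congr rfl fun j _ => ?_
      simp
      ring
    have h2 : ∑ i, ∑ j, B i j * ((x i ^ 2 + x j ^ 2) / 2) ≤ ∑ i, ∑ j, M i j * (x i * x j) := by
      refine Finset.sum_le_sum fun i _ => Finset.sum_le_sum fun j _ => ?_
      by_cases hij : i = j
      · subst hij
        nlinarith [hdiag i, sq_nonneg (x i)]
      · obtain ⟨ha, hb⟩ := abs_le.1 (hoff i j hij)
        nlinarith [sq_nonneg (x i - x j), sq_nonneg (x i + x j)]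
    have h3 : ∑ i, ∑ j, B i j * ((x i ^ 2 + x j ^ 2) / 2) = ∑ i, (∑ j, B i j) * x i ^ 2 := by
      have h4 : ∑ i, ∑ j, B i j * (x j ^ 2 / 2) = ∑ i, ∑ j, B i j * (x i ^ 2 / 2) := by
        rw [Finset.sum_comm]
        refine Finset.sum_congr rfl fun i _ => Finset.sum_congr rfl fun j _ => ?_
        rw [hB]
      have h5 : ∑ i, ∑ j, B i j * ((x i ^ 2 + x j ^ 2) / 2)
          = ∑ i, ∑ j, B i j * (x i ^ 2 / 2) + ∑ i, ∑ j, B i j * (x j ^ 2 / 2) := by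
        simp only [← Finset.sum_add_distrib]
        refine Finset.sum_congr rfl fun i _ => Finset.sum_congr rfl fun j _ => ?_
        ring
      rw [h5, h4]
      simp only [← Finset.sum_add_distrib, Finset.sum_mul]
      refine Finset.sum_congr rfl fun i _ => Finset.sum_congr rfl fun j _ => ?_
      ring
    rw [h1]
    refine le_trans ?_ h2
    rw [h3]
    exact Finset.sum_nonneg fun i _ => mul_nonneg (hrow i) (sq_nonneg _)

lemma psd_shift (g : ℤ → ℝ) (n : ℕ) (e : ℝ) (he : e * e = 1)
    (h : (toepM g (n + 1)).PosSemidef) :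
    (toepM (fun k => 2 * g k + e * (g (k + 1) + g (k - 1))) n).PosSemidef := by
  obtain ⟨D, hD⟩ : ∃ D : Matrix (Fin (n + 1)) (Fin n) ℝ, ∀ i j, D i j =
    (if i = j.succ then 1 else 0) + (if i = j.castSucc then e else 0) :=
    ⟨Matrix.of fun i j => _, fun _ _ => rfl⟩
  have h2 := h.conjTranspose_mul_mul_same D
  convert h2 using 1
  ext i j
  simp only [Matrix.mul_apply, Matrix.conjTranspose_apply, hD, toepM, star_trivial, add_mul, mul_add,
    ite_mul, mul_ite, zero_mul, mul_zero, one_mul, mul_one, Finset.sum_add_distrib,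
    Finset.sum_ite_eq, Finset.sum_ite_eq', Finset.mem_univ, if_true]
  simp only [Fin.val_succ, Fin.val_castSucc, Nat.cast_add, Nat.cast_one]
  have e1 : ((i : ℤ) + 1 - ((j : ℤ) + 1)) = i - j := by ring
  have e2 : ((i : ℤ) - ((j : ℤ) + 1)) = i - j - 1 := by ring
  have e3 : ((i : ℤ) + 1 - (j : ℤ)) = i - j + 1 := by ring
  rw [e1, e2, e3]
  linear_combination (-g (i - j)) * he

open scoped MatrixOrder in
lemma psd_mul_of_commute {n : ℕ} {A B : Matrix (Fin n) (Fin n) ℝ} (hA : A.PosSemidef)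
    (hB : B.PosSemidef) (h : Commute A B) : (A * B).PosSemidef := by
  have hs : Commute (CFC.sqrt A) B := by
    rw [CFC.sqrt_eq_cfc]
    exact h.cfc_nnreal _
  have hh : (CFC.sqrt A)ᴴ = CFC.sqrt A := (CFC.sqrt_nonneg A).posSemidef.isHermitian
  have h1 := hB.mul_mul_conjTranspose_same (CFC.sqrt A)
  rw [hh, hs.eq, mul_assoc, CFC.sqrt_mul_sqrt_self A hA.nonneg, ← h.eq] at h1
  exact h1

/-- truncation -/
def trunc (n : ℕ) (g : ℕ → ℝ) (m : ℕ) : ℝ := if m < n then g m else 0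

/-- Hankel part -/
def hank (n : ℕ) (g : ℕ → ℝ) : Matrix (Fin n) (Fin n) ℝ := fun i j =>
  trunc n g ((i : ℕ) + j + 2) + trunc n g (2 * n - i - j)

lemma row_half (n : ℕ) (g : ℕ → ℝ) (hneg : ∀ m, 1 ≤ m → g m ≤ 0) (i : ℕ) :
    ∑ m ∈ Finset.range n, g m ≤ ∑ m ∈ Finset.range (i + 1), trunc n g m
      + ∑ j ∈ Finset.range n, trunc n g (i + j + 2) := by
  have h1 : ∑ m ∈ Finset.range (n + (i + 2)), trunc n g m = ∑ m ∈ Finset.range n, g m := by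
    rw [Finset.sum_range_add]
    have a1 : ∑ m ∈ Finset.range n, trunc n g m = ∑ m ∈ Finset.range n, g m :=
      Finset.sum_congr rfl fun m hm => by simp [trunc, Finset.mem_range.1 hm]
    have a2 : ∑ m ∈ Finset.range (i + 2), trunc n g (n + m) = 0 :=
      Finset.sum_eq_zero fun m _ => by simp [trunc]
    rw [a1, a2, add_zero]
  rw [add_comm n, Finset.sum_range_add, Finset.sum_range_succ] at h1
  have h2 : ∑ j ∈ Finset.range n, trunc n g (i + 2 + j) = ∑ j ∈ Finset.range n, trunc n g (i + j + 2) :=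
    Finset.sum_congr rfl fun j _ => by congr 1; ring
  have h3 : trunc n g (i + 1) ≤ 0 := by
    unfold trunc
    split_ifs
    · exact hneg _ (by omega)
    · exact le_rfl
  rw [h2] at h1
  linarith

lemma row_sum (n : ℕ) (g : ℕ → ℝ) (hneg : ∀ m, 1 ≤ m → g m ≤ 0)
    (hrow : ∀ n, 1 ≤ n → 0 ≤ 2 * ∑ m ∈ Finset.range n, g m - g 0) (i : Fin n) :
    0 ≤ ∑ j : Fin n, (g ((i : ℤ) - (j : ℤ)).natAbs + hank n g i j) := by
  have hn : 1 ≤ n := by have := i.2; omega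
  obtain ⟨i, hi⟩ := i
  obtain ⟨k, rfl⟩ : ∃ k, n = i + 1 + k := ⟨n - 1 - i, by omega⟩
  have hH := hrow _ hn
  have r1 := row_half (i + 1 + k) g hneg i
  have r2 := row_half (i + 1 + k) g hneg k
  have key : ∑ j : Fin (i + 1 + k), (g ((i : ℤ) - (j : ℤ)).natAbs + hank (i + 1 + k) g ⟨i, hi⟩ j)
      = ∑ j ∈ Finset.range (i + 1 + k), trunc (i + 1 + k) g ((i : ℤ) - (j : ℤ)).natAbs
        + (∑ j ∈ Finset.range (i + 1 + k), trunc (i + 1 + k) g (i + j + 2)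
        + ∑ j ∈ Finset.range (i + 1 + k), trunc (i + 1 + k) g (2 * (i + 1 + k) - i - j)) := by
    simp only [← Finset.sum_add_distrib, Finset.sum_range]
    refine Finset.sum_congr rfl fun j _ => ?_
    have hj := j.2
    simp only [hank]
    congr 1
    unfold trunc
    rw [if_pos]
    omega
  have k1 : ∑ j ∈ Finset.range (i + 1 + k), trunc (i + 1 + k) g (2 * (i + 1 + k) - i - j)
      = ∑ j ∈ Finset.range (i + 1 + k), trunc (i + 1 + k) g (k + j + 2) := by
    rw [← Finset.sum_range_reflect]
    refine Finset.sum_congr rfl fun j hj => ?_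
    have := Finset.mem_range.1 hj
    congr 1
    omega
  have k2 : ∑ j ∈ Finset.range (i + 1 + k), trunc (i + 1 + k) g ((i : ℤ) - (j : ℤ)).natAbs
      = ∑ m ∈ Finset.range (i + 1), trunc (i + 1 + k) g m
        + (∑ m ∈ Finset.range (k + 1), trunc (i + 1 + k) g m - g 0) := by
    rw [Finset.sum_range_add, Finset.sum_range_succ' _ k]
    have z : trunc (i + 1 + k) g 0 = g 0 := by simp [trunc]
    rw [z, add_sub_cancel_right]
    congr 1
    · rw [← Finset.sum_range_reflect]
      refine Finset.sum_congr rfl fun j hj => ?_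
      have := Finset.mem_range.1 hj
      congr 1
      omega
    · refine Finset.sum_congr rfl fun j hj => ?_
      congr 1
      omega
  rw [show ((⟨i, hi⟩ : Fin (i + 1 + k)) : ℕ) = i from rfl, key, k1, k2]
  linarith

lemma psd_combo (n : ℕ) (g : ℤ → ℝ) (heven : ∀ k, g (-k) = g k)
    (hneg : ∀ m : ℕ, 1 ≤ m → g m ≤ 0)
    (hmono : ∀ m m' : ℕ, 1 ≤ m → m ≤ m' → g m ≤ g m')
    (hrow : ∀ n : ℕ, 1 ≤ n → 0 ≤ 2 * ∑ m ∈ Finset.range n, g (m : ℤ) - g 0)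
    (c : ℝ) (hc1 : -3 ≤ c) (hc2 : c ≤ 1) :
    (toepM g n + c • hank n (fun m => g m)).PosSemidef := by
  have habs : ∀ k : ℤ, g k = g (k.natAbs : ℤ) := by
    intro k
    rcases Int.natAbs_eq k with h | h
    · rw [← h]
    · conv_lhs => rw [h, heven]
  have hs : ∀ i j, toepM g n i j = toepM g n j i := by
    intro i j
    unfold toepM
    rw [← heven, neg_sub]
  have hk : ∀ i j, hank n (fun m => g m) i j = hank n (fun m => g m) j i := by
    intro i j
    unfold hank
    congr 2 <;> omega
  have tr0 : ∀ m, 1 ≤ m → trunc n (fun m => g m) m ≤ 0 := by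
    intro m hm
    unfold trunc
    split_ifs
    · exact hneg m hm
    · exact le_rfl
  have hk0 : ∀ i j, hank n (fun m => g m) i j ≤ 0 := by
    intro i j
    have h1 := tr0 ((i : ℕ) + j + 2) (by omega)
    have h2 := tr0 (2 * n - i - j) (by omega)
    unfold hank
    linarith
  have hkg : ∀ i j, i ≠ j → toepM g n i j ≤ hank n (fun m => g m) i j := by
    intro i j hij
    have hij' : (i : ℕ) ≠ j := fun h => hij (Fin.ext h)
    unfold toepM hank
    rw [habs]
    unfold trunc
    have hm1 := hneg ((i : ℤ) - (j : ℤ)).natAbs (by omega)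
    have hi := i.2
    have hj := j.2
    split_ifs with h1 h2 h2
    · omega
    · rw [add_zero]
      exact hmono _ _ (by omega) (by omega)
    · rw [zero_add]
      exact hmono _ _ (by omega) (by omega)
    · simpa using hm1
  refine psd_of_dom _ (toepM g n + hank n (fun m => g m)) ?_ ?_ ?_ ?_ ?_
  · intro i j
    simp only [Matrix.add_apply, Matrix.smul_apply, smul_eq_mul]
    rw [hs, hk]
  · intro i j
    simp only [Matrix.add_apply]
    rw [hs, hk]
  · intro i j hij
    simp only [Matrix.add_apply, Matrix.smul_apply, smul_eq_mul]
    have h1 := hkg i j hij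
    have h2 := hk0 i j
    rw [abs_le]
    constructor <;> nlinarith
  · intro i
    simp only [Matrix.add_apply, Matrix.smul_apply, smul_eq_mul]
    have h2 := hk0 i i
    nlinarith
  · intro i
    have := row_sum n (fun m => g m) hneg hrow i
    refine this.trans_eq (Finset.sum_congr rfl fun j _ => ?_)
    simp only [Matrix.add_apply, toepM]
    rw [habs ((i : ℤ) - j)]

lemma tri_toep (n : ℕ) : triDiag n =
    toepM (fun k => 2 * (if k = 0 then (1 : ℝ) else 0)
      + (-1) * ((if k + 1 = 0 then 1 else 0) + (if k - 1 = 0 then 1 else 0))) n := by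
  ext i j
  unfold triDiag toepM
  beta_reduce
  split_ifs <;> first | omega | norm_num

lemma toep_delta (n : ℕ) : toepM (fun k => if k = 0 then (1 : ℝ) else 0) n = 1 := by
  ext i j
  unfold toepM
  rw [Matrix.one_apply]
  by_cases h : i = j
  · simp [h]
  · have h' : (i : ℕ) ≠ j := fun e => h (Fin.ext e)
    rw [if_neg h]
    beta_reduce
    rw [if_neg]
    omega

lemma tri_psd (n : ℕ) : (triDiag n).PosSemidef := by
  rw [tri_toep]
  refine psd_shift (fun k => if k = 0 then (1 : ℝ) else 0) n (-1) (by norm_num) ?_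
  rw [toep_delta]
  exact Matrix.PosSemidef.one

lemma four_sub_tri_psd (n : ℕ) : ((4 : ℝ) • (1 : Matrix (Fin n) (Fin n) ℝ) - triDiag n).PosSemidef := by
  have h := psd_shift (fun k => if k = 0 then (1 : ℝ) else 0) n 1 (by norm_num)
    (by rw [toep_delta]; exact Matrix.PosSemidef.one)
  convert h using 1
  rw [tri_toep, ← toep_delta]
  ext i j
  simp only [toepM, Matrix.sub_apply, Matrix.smul_apply, smul_eq_mul]
  ring

lemma tri_sum (n : ℕ) (f : ℤ → ℝ) (h0 : f (-1) = 0) (hn : f n = 0) (i : Fin n) :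
    ∑ k : Fin n, triDiag n i k * f k = 2 * f i - f (i - 1) - f (i + 1) := by
  have key : ∀ m : ℤ, -1 ≤ m → m ≤ n → ∑ k : Fin n, (if (k : ℤ) = m then f k else 0) = f m := by
    intro m h1 h2
    by_cases hm : 0 ≤ m ∧ m < n
    · obtain ⟨p, rfl⟩ := Int.eq_ofNat_of_zero_le hm.1
      have hp : p < n := by omega
      rw [Finset.sum_eq_single (⟨p, hp⟩ : Fin n)]
      · simp
      · intro b _ hb
        rw [if_neg]
        intro h
        exact hb (Fin.ext (by simpa using h))
      · simp
    · have : m = -1 ∨ m = n := by omega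
      have hf : f m = 0 := by rcases this with rfl | rfl <;> assumption
      rw [hf]
      refine Finset.sum_eq_zero fun k _ => ?_
      rw [if_neg]
      have := k.2
      omega
  have hi := i.2
  rw [← key i (by omega) (by omega), ← key (i - 1) (by omega) (by omega),
    ← key (i + 1) (by omega) (by omega), Finset.mul_sum, ← Finset.sum_sub_distrib,
    ← Finset.sum_sub_distrib]
  refine Finset.sum_congr rfl fun k _ => ?_
  unfold triDiag
  split_ifs <;> first | omega | ring

/-- extension of the tau matrix to integer indices -/
def tauF (n : ℕ) (g : ℕ → ℝ) (i j : ℤ) : ℝ :=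
  trunc n g (i - j).natAbs - trunc n g (i + j + 2).natAbs - trunc n g (2 * n - i - j).natAbs

lemma tau_eq_F (n : ℕ) (g : ℕ → ℝ) (i j : Fin n) : tauOf n g i j = tauF n g i j := by
  have hi := i.2
  have hj := j.2
  unfold tauOf tauF trunc
  have e1 : (i : ℕ) + 1 + (j + 1) = ((i : ℤ) + j + 2).natAbs := by omega
  have e2 : 2 * (n + 1) - ((i : ℕ) + 1) - (j + 1) = (2 * (n : ℤ) - i - j).natAbs := by omega
  simp only [e1, e2]

lemma tau_commute (n : ℕ) (g : ℕ → ℝ) : Commute (triDiag n) (tauOf n g) := by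
  have z1 : ∀ j : Fin n, tauF n g (-1) j = 0 := by
    intro j
    have hj := j.2
    unfold tauF
    rw [show (2 * (n : ℤ) - -1 - j).natAbs = 2 * n + 1 - j by omega,
      show ((-1 : ℤ) - j).natAbs = (-1 + (j : ℤ) + 2).natAbs by omega]
    unfold trunc
    rw [if_neg (show ¬ (2 * n + 1 - (j : ℕ) < n) by omega)]
    ring
  have z2 : ∀ j : Fin n, tauF n g n j = 0 := by
    intro j
    have hj := j.2
    unfold tauF
    rw [show (2 * (n : ℤ) - n - j).natAbs = ((n : ℤ) - j).natAbs by omega]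
    unfold trunc
    rw [if_neg (show ¬ (((n : ℤ) + j + 2).natAbs < n) by omega)]
    ring
  have sym : ∀ i j : ℤ, tauF n g i j = tauF n g j i := by
    intro i j
    unfold tauF
    rw [show (i - j).natAbs = (j - i).natAbs by omega, show i + j = j + i by ring,
      show 2 * (n : ℤ) - i - j = 2 * n - j - i by ring]
  have tsym : ∀ i j : Fin n, triDiag n i j = triDiag n j i := by
    intro i j
    unfold triDiag
    split_ifs <;> first | omega | rfl
  show triDiag n * tauOf n g = tauOf n g * triDiag n
  ext i j
  rw [Matrix.mul_apply, Matrix.mul_apply]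
  have l : ∑ k, triDiag n i k * tauOf n g k j = ∑ k : Fin n, triDiag n i k * (fun k => tauF n g k j) (k : ℤ) :=
    Finset.sum_congr rfl fun k _ => by rw [tau_eq_F]
  have r : ∑ k, tauOf n g i k * triDiag n k j = ∑ k : Fin n, triDiag n j k * (fun k => tauF n g k i) (k : ℤ) :=
    Finset.sum_congr rfl fun k _ => by rw [tau_eq_F, tsym k j, sym, mul_comm]
  rw [l, r, tri_sum n (fun k => tauF n g k j) (z1 j) (z2 j) i,
    tri_sum n (fun k => tauF n g k i) (z1 i) (z2 i) j]
  rw [sym j i]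
  unfold tauF
  rw [show ((j : ℤ) - 1 - i).natAbs = ((i : ℤ) + 1 - j).natAbs by omega,
    show ((j : ℤ) + 1 - i).natAbs = ((i : ℤ) - 1 - j).natAbs by omega,
    show ((j : ℤ) - 1 + i) = ((i : ℤ) - 1 + j) by ring,
    show ((j : ℤ) + 1 + i) = ((i : ℤ) + 1 + j) by ring,
    show (2 * (n : ℤ) - (j - 1) - i) = (2 * (n : ℤ) - (i - 1) - j) by ring,
    show (2 * (n : ℤ) - (j + 1) - i) = (2 * (n : ℤ) - (i + 1) - j) by ring]
  ring

section coef
variable {γ : ℝ}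

lemma g_even (k : ℤ) : gCoef γ (-k) = gCoef γ k := by
  unfold gCoef
  rw [_root_.zpow_neg, ← _root_.inv_zpow]
  push_cast
  rw [show ((-1 : ℝ)⁻¹) = -1 by norm_num, show γ / 2 - -(k : ℝ) + 1 = γ / 2 + k + 1 by ring,
    show γ / 2 + -(k : ℝ) + 1 = γ / 2 - k + 1 by ring, mul_comm (Real.Gamma (γ / 2 + k + 1))]

lemma ne_int (hγ : γ ∈ Set.Ioo (1 : ℝ) 2) (k : ℤ) : γ / 2 + k ≠ 0 := by
  intro h
  have h1 : (-1 : ℝ) < k := by linarith [hγ.1, hγ.2]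
  have h2 : (k : ℝ) < 0 := by linarith [hγ.1, hγ.2]
  have h3 : -1 < k := by exact_mod_cast h1
  have h4 : k < 0 := by exact_mod_cast h2
  omega

lemma g_rec (hγ : γ ∈ Set.Ioo (1 : ℝ) 2) (k : ℤ) :
    (γ / 2 + k + 1) * gCoef γ (k + 1) = (k - γ / 2) * gCoef γ k := by
  have n1 : γ / 2 + k + 1 ≠ 0 := by
    have := ne_int hγ (k + 1); push_cast at this; rwa [add_assoc]
  have n2 : γ / 2 - k ≠ 0 := by
    have := ne_int hγ (-k); push_cast at this; rwa [sub_eq_add_neg]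
  have g1 : Real.Gamma (γ / 2 + k + 1 + 1) = (γ / 2 + k + 1) * Real.Gamma (γ / 2 + k + 1) :=
    Real.Gamma_add_one n1
  have g2 : Real.Gamma (γ / 2 - k + 1) = (γ / 2 - k) * Real.Gamma (γ / 2 - k) :=
    Real.Gamma_add_one n2
  have p1 : Real.Gamma (γ / 2 + k + 1) ≠ 0 := by
    refine Real.Gamma_ne_zero fun m h => ?_
    refine ne_int hγ (k + 1 + m) ?_
    push_cast; linarith
  have p2 : Real.Gamma (γ / 2 - k) ≠ 0 := by
    refine Real.Gamma_ne_zero fun m h => ?_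
    refine ne_int hγ (-k + m) ?_
    push_cast; linarith
  unfold gCoef
  push_cast
  rw [show γ / 2 - ((k : ℝ) + 1) + 1 = γ / 2 - k by ring,
    show γ / 2 + ((k : ℝ) + 1) + 1 = γ / 2 + k + 1 + 1 by ring, g1, g2,
    zpow_add₀ (by norm_num : (-1 : ℝ) ≠ 0), zpow_one]
  generalize Real.Gamma (γ / 2 + k + 1) = X at *
  generalize Real.Gamma (γ / 2 - k) = Y at *
  generalize Real.Gamma (γ + 1) = Z at *
  generalize γ / 2 = a at *
  field_simp
  ring

lemma s_eq (hγ : γ ∈ Set.Ioo (1 : ℝ) 2) (k : ℤ) :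
    sCoef γ k = gCoef γ k + γ / 24 * (2 * gCoef γ k + (-1) * (gCoef γ (k + 1) + gCoef γ (k - 1))) := by
  have r1 := g_rec hγ k
  have r2 := g_rec hγ (k - 1)
  rw [sub_add_cancel] at r2
  push_cast at r2
  have n1 : γ / 2 + k + 1 ≠ 0 := by
    have := ne_int hγ (k + 1); push_cast at this; rwa [add_assoc]
  have n2 : γ / 2 - k + 1 ≠ 0 := by
    have := ne_int hγ (-k + 1); push_cast at this; rwa [sub_eq_add_neg, add_assoc]
  have h1 : gCoef γ (k + 1) = (k - γ / 2) * gCoef γ k / (γ / 2 + k + 1) := by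
    rw [eq_div_iff n1]; linarith
  have h2 : gCoef γ (k - 1) = -(γ / 2 + k) * gCoef γ k / (γ / 2 - k + 1) := by
    rw [eq_div_iff n2]; linarith
  have h3 : sCoef γ k = gCoef γ k *
    (1 + γ * (γ + 1) * (γ + 2) / (6 * (γ - 2 * k + 2) * (γ + 2 * k + 2))) := rfl
  rw [h3, h1, h2, show γ - 2 * k + 2 = 2 * (γ / 2 - k + 1) by ring,
    show γ + 2 * k + 2 = 2 * (γ / 2 + k + 1) by ring]
  generalize gCoef γ k = X
  obtain ⟨a, rfl⟩ : ∃ a, γ = 2 * a := ⟨γ / 2, by ring⟩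
  rw [show 2 * a / 2 = a by ring] at *
  field_simp
  ring

lemma g_zero_pos (hγ : γ ∈ Set.Ioo (1 : ℝ) 2) : 0 < gCoef γ 0 := by
  have := hγ.1
  have p1 : 0 < Real.Gamma (γ + 1) := Real.Gamma_pos_of_pos (by linarith)
  have p2 : 0 < Real.Gamma (γ / 2 + 1) := Real.Gamma_pos_of_pos (by linarith)
  unfold gCoef
  simp only [zpow_zero, Int.cast_zero, sub_zero, add_zero, one_mul]
  positivity

lemma g_neg (hγ : γ ∈ Set.Ioo (1 : ℝ) 2) (m : ℕ) (hm : 1 ≤ m) : gCoef γ m ≤ 0 := by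
  obtain ⟨h1, h2⟩ := hγ
  induction m, hm using Nat.le_induction with
  | base =>
    have r := g_rec ⟨h1, h2⟩ 0
    have := g_zero_pos ⟨h1, h2⟩
    simp only [zero_add, Int.cast_zero, add_zero] at r
    by_contra! hc
    simp only [Nat.cast_one] at hc
    nlinarith
  | succ m hm ih =>
    have r := g_rec ⟨h1, h2⟩ m
    have hm' : (1 : ℝ) ≤ m := by exact_mod_cast hm
    push_cast at r ⊢
    by_contra! hc
    nlinarith

lemma g_mono (hγ : γ ∈ Set.Ioo (1 : ℝ) 2) (m m' : ℕ) (hm : 1 ≤ m) (h : m ≤ m') :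
    gCoef γ m ≤ gCoef γ m' := by
  induction m', h using Nat.le_induction with
  | base => exact le_rfl
  | succ p hp ih =>
    refine ih.trans ?_
    have r := g_rec hγ p
    have hn := g_neg hγ p (hm.trans hp)
    have hn' := g_neg hγ (p + 1) (by omega)
    obtain ⟨h1, h2⟩ := hγ
    have hp' : (1 : ℝ) ≤ p := by exact_mod_cast hm.trans hp
    push_cast at r hn' ⊢
    nlinarith

lemma g_sum (hγ : γ ∈ Set.Ioo (1 : ℝ) 2) (n : ℕ) :
    γ / 2 * (2 * ∑ m ∈ Finset.range n, gCoef γ (m : ℤ) - gCoef γ 0) = -((n + γ / 2) * gCoef γ n) := by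
  induction n with
  | zero => simp
  | succ n ih =>
    have r := g_rec hγ n
    rw [Finset.sum_range_succ]
    push_cast at r ⊢
    linear_combination ih + r

lemma g_row (hγ : γ ∈ Set.Ioo (1 : ℝ) 2) (n : ℕ) (hn : 1 ≤ n) :
    0 ≤ 2 * ∑ m ∈ Finset.range n, gCoef γ (m : ℤ) - gCoef γ 0 := by
  have h := g_sum hγ n
  have h2 := g_neg hγ n hn
  have h3 := hγ.1
  have h4 : 0 ≤ γ / 2 * (2 * ∑ m ∈ Finset.range n, gCoef γ (m : ℤ) - gCoef γ 0) := by
    rw [h, ← mul_neg]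
    exact mul_nonneg (by positivity) (by linarith)
  exact nonneg_of_mul_nonneg_right h4 (by positivity)

lemma combo (hγ : γ ∈ Set.Ioo (1 : ℝ) 2) (n : ℕ) (c : ℝ) (hc1 : -3 ≤ c) (hc2 : c ≤ 1) :
    (toepM (gCoef γ) n + c • hank n (fun m => gCoef γ m)).PosSemidef :=
  psd_combo n (gCoef γ) g_even (g_neg hγ) (g_mono hγ) (g_row hγ) c hc1 hc2

lemma tau_eq (n : ℕ) : tauAhat γ n = toepM (gCoef γ) n - hank n (fun m => gCoef γ m) := by
  ext i j
  have hi := i.2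
  have hj := j.2
  have e : gCoef γ ((i : ℤ) - j) = gCoef γ (((i : ℤ) - j).natAbs : ℤ) := by
    rcases Int.natAbs_eq ((i : ℤ) - j) with h | h
    · rw [← h]
    · conv_lhs => rw [h, g_even]
  unfold tauAhat
  rw [tau_eq_F]
  simp only [Matrix.sub_apply, toepM, hank, tauF]
  rw [e, show ((i : ℤ) + j + 2).natAbs = (i : ℕ) + j + 2 by omega,
    show (2 * (n : ℤ) - i - j).natAbs = 2 * n - i - j by omega]
  have : trunc n (fun m => gCoef γ m) ((i : ℤ) - j).natAbs = gCoef γ (((i : ℤ) - j).natAbs : ℤ) := by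
    unfold trunc
    rw [if_pos (by omega)]
  rw [this]
  ring

lemma tau_psd (hγ : γ ∈ Set.Ioo (1 : ℝ) 2) (n : ℕ) : (tauAhat γ n).PosSemidef := by
  have := combo hγ n (-1) (by norm_num) (by norm_num)
  rwa [neg_smul, one_smul, ← sub_eq_add_neg, ← tau_eq] at this

lemma A_eq (hγ : γ ∈ Set.Ioo (1 : ℝ) 2) (n : ℕ) : Amat γ n = toepM (gCoef γ) n +
    (γ / 24) • toepM (fun k => 2 * gCoef γ k + (-1) * (gCoef γ (k + 1) + gCoef γ (k - 1))) n := by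
  ext i j
  simp only [Amat, toepM, Matrix.add_apply, Matrix.smul_apply, smul_eq_mul]
  exact s_eq hγ _

lemma toep_psd (hγ : γ ∈ Set.Ioo (1 : ℝ) 2) (n : ℕ) : (toepM (gCoef γ) n).PosSemidef := by
  simpa using combo hγ n 0 (by norm_num) (by norm_num)

lemma P_eq (n : ℕ) : Pmat γ n = tauAhat γ n + (γ / 24) • (triDiag n * tauAhat γ n) := by
  rw [Pmat, Qmat, add_mul, one_mul, Matrix.smul_mul]

lemma lower (hγ : γ ∈ Set.Ioo (1 : ℝ) 2) (n : ℕ) : (Amat γ n - (3 / 8 : ℝ) • Pmat γ n).PosSemidef := by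
  obtain ⟨h1, h2⟩ := id hγ
  have a := (psd_shift (gCoef γ) n (-1) (by norm_num) (toep_psd hγ (n + 1))).smul
    (show (0 : ℝ) ≤ γ / 24 by linarith)
  have b := (combo hγ n 1 (by norm_num) (by norm_num)).smul (show (0 : ℝ) ≤ 1 / 2 by norm_num)
  have c := (tau_psd hγ n).smul (show (0 : ℝ) ≤ 3 / 8 * (1 / 3 - γ / 6) by linarith)
  have hc : Commute ((4 : ℝ) • (1 : Matrix (Fin n) (Fin n) ℝ) - triDiag n) (tauAhat γ n) :=
    ((Commute.one_left _).smul_left _).sub_left (tau_commute n _)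
  have d := (psd_mul_of_commute (four_sub_tri_psd n) (tau_psd hγ n) hc).smul
    (show (0 : ℝ) ≤ 3 / 8 * (γ / 24) by linarith)
  convert ((a.add b).add c).add d using 1
  rw [A_eq hγ, P_eq, sub_mul, Matrix.smul_mul, one_mul]
  generalize triDiag n * tauAhat γ n = X
  rw [tau_eq]
  ext i j
  simp only [Matrix.add_apply, Matrix.smul_apply, Matrix.sub_apply, smul_eq_mul]
  ring

lemma upper (hγ : γ ∈ Set.Ioo (1 : ℝ) 2) (n : ℕ) : ((2 : ℝ) • Pmat γ n - Amat γ n).PosSemidef := by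
  obtain ⟨h1, h2⟩ := id hγ
  have a := (psd_shift (gCoef γ) n 1 (by norm_num) (toep_psd hγ (n + 1))).smul
    (show (0 : ℝ) ≤ γ / 24 by linarith)
  have b := (combo hγ n (-3) (by norm_num) (by norm_num)).smul (show (0 : ℝ) ≤ 2 / 3 by norm_num)
  have c := (toep_psd hγ n).smul (show (0 : ℝ) ≤ 1 / 3 - γ / 6 by linarith)
  have d := (psd_mul_of_commute (tri_psd n) (tau_psd hγ n) (tau_commute n _)).smul
    (show (0 : ℝ) ≤ 2 * (γ / 24) by linarith)
  convert ((a.add b).add c).add d using 1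
  rw [A_eq hγ, P_eq]
  generalize triDiag n * tauAhat γ n = X
  rw [tau_eq]
  ext i j
  simp only [Matrix.add_apply, Matrix.smul_apply, Matrix.sub_apply, smul_eq_mul, toepM]
  ring

end coef

theorem stmt_18 (α β : ℝ) (hα : α ∈ Set.Ioo (1 : ℝ) 2) (hβ : β ∈ Set.Ioo (1 : ℝ) 2)
    (Nx Ny : ℕ) (hNx : 1 ≤ Nx) (hNy : 1 ≤ Ny)
    (ηα ηβ : ℝ) (hηα : 0 < ηα) (hηβ : 0 < ηβ) :
    ∀ J Pτ : Matrix (Fin Ny × Fin Nx) (Fin Ny × Fin Nx) ℝ,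
      J = ηα • ((1 : Matrix (Fin Ny) (Fin Ny) ℝ) ⊗ₖ Amat α Nx) +
            ηβ • (Amat β Ny ⊗ₖ (1 : Matrix (Fin Nx) (Fin Nx) ℝ)) →
      Pτ = 1 + ηα • ((1 : Matrix (Fin Ny) (Fin Ny) ℝ) ⊗ₖ Pmat α Nx) +
             ηβ • (Pmat β Ny ⊗ₖ (1 : Matrix (Fin Nx) (Fin Nx) ℝ)) →
      (∀ v : Fin Ny × Fin Nx → ℝ, v ≠ 0 →
        (3 / 8) * (v ⬝ᵥ Pτ *ᵥ v) < v ⬝ᵥ (1 + J) *ᵥ v ∧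
        v ⬝ᵥ (1 + J) *ᵥ v < 2 * (v ⬝ᵥ Pτ *ᵥ v)) ∧
      (∀ (μ : ℝ) (v : Fin Ny × Fin Nx → ℝ), v ≠ 0 →
        (Pτ⁻¹ * (1 + J)) *ᵥ v = μ • v → 3 / 8 < μ ∧ μ < 2) := by
  intro J Pτ hJ hP
  have main : ∀ v : Fin Ny × Fin Nx → ℝ, v ≠ 0 →
      (3 / 8) * (v ⬝ᵥ Pτ *ᵥ v) < v ⬝ᵥ (1 + J) *ᵥ v ∧
      v ⬝ᵥ (1 + J) *ᵥ v < 2 * (v ⬝ᵥ Pτ *ᵥ v) := by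
    intro v hv
    have hvv : 0 < v ⬝ᵥ v := by
      have := Matrix.dotProduct_star_self_pos_iff.2 hv
      simpa using this
    have l1 := ((Matrix.PosSemidef.one (n := Fin Ny) (R := ℝ)).kronecker (lower hα Nx)).smul hηα.le
    have l2 := ((lower hβ Ny).kronecker (Matrix.PosSemidef.one (n := Fin Nx) (R := ℝ))).smul hηβ.le
    have u1 := ((Matrix.PosSemidef.one (n := Fin Ny) (R := ℝ)).kronecker (upper hα Nx)).smul hηα.le
    have u2 := ((upper hβ Ny).kronecker (Matrix.PosSemidef.one (n := Fin Nx) (R := ℝ))).smul hηβ.le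
    have L := (l1.add l2).dotProduct_mulVec_nonneg v
    have U := (u1.add u2).dotProduct_mulVec_nonneg v
    have eL : ηα • ((1 : Matrix (Fin Ny) (Fin Ny) ℝ) ⊗ₖ (Amat α Nx - (3 / 8 : ℝ) • Pmat α Nx)) +
        ηβ • ((Amat β Ny - (3 / 8 : ℝ) • Pmat β Ny) ⊗ₖ (1 : Matrix (Fin Nx) (Fin Nx) ℝ))
        = (1 + J) - (3 / 8 : ℝ) • Pτ - (5 / 8 : ℝ) • 1 := by
      rw [hJ, hP]
      ext i j
      simp only [Matrix.add_apply, Matrix.smul_apply, Matrix.sub_apply, smul_eq_mul,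
        Matrix.kroneckerMap_apply]
      ring
    have eU : ηα • ((1 : Matrix (Fin Ny) (Fin Ny) ℝ) ⊗ₖ ((2 : ℝ) • Pmat α Nx - Amat α Nx)) +
        ηβ • (((2 : ℝ) • Pmat β Ny - Amat β Ny) ⊗ₖ (1 : Matrix (Fin Nx) (Fin Nx) ℝ))
        = (2 : ℝ) • Pτ - (1 + J) - 1 := by
      rw [hJ, hP]
      ext i j
      simp only [Matrix.add_apply, Matrix.smul_apply, Matrix.sub_apply, smul_eq_mul,
        Matrix.kroneckerMap_apply]
      ring
    rw [eL] at L
    rw [eU] at U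
    simp only [star_trivial, Matrix.sub_mulVec, Matrix.smul_mulVec, Matrix.one_mulVec,
      dotProduct_sub, dotProduct_smul, smul_eq_mul] at L U
    constructor <;> linarith
  refine ⟨main, ?_⟩
  intro μ v hv hμ
  have hpos : ∀ w : Fin Ny × Fin Nx → ℝ, w ≠ 0 → 0 < w ⬝ᵥ Pτ *ᵥ w := by
    intro w hw
    obtain ⟨h1, h2⟩ := main w hw
    linarith
  have hinj : Function.Injective Pτ.mulVec := by
    intro a b hab
    by_contra hne
    have h := hpos (a - b) (sub_ne_zero.2 hne)
    have hab' : Pτ *ᵥ a = Pτ *ᵥ b := hab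
    rw [Matrix.mulVec_sub, hab', sub_self, dotProduct_zero] at h
    exact lt_irrefl _ h
  have hu : IsUnit Pτ.det := (Matrix.isUnit_iff_isUnit_det _).1 (Matrix.mulVec_injective_iff_isUnit.1 hinj)
  have h1 : (1 + J) *ᵥ v = μ • (Pτ *ᵥ v) := by
    have := congrArg (fun w => Pτ *ᵥ w) hμ
    simp only [Matrix.mulVec_mulVec, Matrix.mulVec_smul] at this
    rwa [Matrix.mul_nonsing_inv_cancel_left _ _ hu] at this
  obtain ⟨m1, m2⟩ := main v hv
  have hp := hpos v hv
  rw [h1, dotProduct_smul, smul_eq_mul] at m1 m2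
  exact ⟨lt_of_mul_lt_mul_right m1 hp.le, lt_of_mul_lt_mul_right m2 hp.le⟩
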